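/- Let H be a 2-vertex-connected undirected graph with a DFS tree T rooted at r, and let u and v be vertices different from r such that v is an ancestor of u and M(v) is a descendant of u. Then M(v) is a descendant of M(u). -/

import Mathlib

/-- A DFS tree of the graph `H`, rooted at `r`, given by a parent function:
it is a spanning tree (every vertex reaches the root by iterating the parent
function, and each non-root vertex is adjacent to its parent), and every edge
of `H` joins a vertex to one of its ancestors. -/
structure DFSTree {V : Type*} (H : SimpleGraph V) (r : V) where
  par : V → V
  par_root : par r = r
  reaches_root : ∀ v : V, ∃ n : ℕ, par^[n] v = r
  par_adj : ∀ v : V, v ≠ r → H.Adj v (par v)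
  edge_anc : ∀ x y : V, H.Adj x y → (∃ n : ℕ, par^[n] x = y) ∨ (∃ n : ℕ, par^[n] y = x)

namespace DFSTree

variable {V : Type*} {H : SimpleGraph V} {r : V} (T : DFSTree H r)

/-- `a` is an ancestor of `b` (every vertex is an ancestor of itself). -/
def Anc (a b : V) : Prop := ∃ n : ℕ, T.par^[n] b = a

/-- `a` is a proper ancestor of `b`. -/
def PAnc (a b : V) : Prop := T.Anc a b ∧ a ≠ b

/-- `(x,y)` is a back-edge: an edge of `H` from `x` to an ancestor `y` of `x`
which is not the tree edge from `x` to its parent. -/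
def BackEdge (x y : V) : Prop := H.Adj x y ∧ T.Anc y x ∧ T.par x ≠ y

/-- The set of descendants of `v` joined by a back-edge to a proper ancestor of `v`. -/
def MSet (v : V) : Set V := {x | T.Anc v x ∧ ∃ y, T.PAnc y v ∧ T.BackEdge x y}

/-- `m = M(v)`: `m` is the nearest common ancestor of all descendants of `v`
joined by a back-edge to a proper ancestor of `v`. -/
def IsM (v m : V) : Prop :=
  (∀ x ∈ T.MSet v, T.Anc m x) ∧ ∀ m' : V, (∀ x ∈ T.MSet v, T.Anc m' x) → T.Anc m' m

/-- The set of descendants of `v` joined by a back-edge to a proper ancestor of `p(v)`. -/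
def MpSet (v : V) : Set V := {x | T.Anc v x ∧ ∃ y, T.PAnc y (T.par v) ∧ T.BackEdge x y}

/-- `m = M_p(v)`: `m` is the nearest common ancestor of all descendants of `v`
joined by a back-edge to a proper ancestor of `p(v)`. -/
def IsMp (v m : V) : Prop :=
  (∀ x ∈ T.MpSet v, T.Anc m x) ∧ ∀ m' : V, (∀ x ∈ T.MpSet v, T.Anc m' x) → T.Anc m' m

/-- `h = high(v)`: `h` is the deepest proper ancestor of `v` joined by a
back-edge to a descendant of `v`. -/
def IsHigh (v h : V) : Prop :=
  T.PAnc h v ∧ (∃ x, T.Anc v x ∧ T.BackEdge x h) ∧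
    ∀ h' : V, T.PAnc h' v → (∃ x, T.Anc v x ∧ T.BackEdge x h') → T.Anc h' h

/-- `h = high_p(v)`: `h` is the deepest proper ancestor of `p(v)` joined by a
back-edge to a descendant of `v`. -/
def IsHighP (v h : V) : Prop :=
  T.PAnc h (T.par v) ∧ (∃ x, T.Anc v x ∧ T.BackEdge x h) ∧
    ∀ h' : V, T.PAnc h' (T.par v) → (∃ x, T.Anc v x ∧ T.BackEdge x h') → T.Anc h' h

/-- `l = low(v)`: `l` is the proper ancestor of `v` nearest to the root joined
by a back-edge to a descendant of `v`. -/
def IsLow (v l : V) : Prop :=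
  T.PAnc l v ∧ (∃ x, T.Anc v x ∧ T.BackEdge x l) ∧
    ∀ l' : V, T.PAnc l' v → (∃ x, T.Anc v x ∧ T.BackEdge x l') → T.Anc l l'

end DFSTree

/-- `{v, e}` is a vertex-edge cut-pair of `H`: `e` is an edge of `H` and deleting
both `v` (with its incident edges) and `e` disconnects `H`. -/
def VECutPair {V : Type*} (H : SimpleGraph V) (v : V) (e : Sym2 V) : Prop :=
  e ∈ H.edgeSet ∧ ¬ ((H.deleteEdges {e}).induce {u | u ≠ v}).Connected

/-- `{e, e'}` is a cut-pair of `H`: `e` and `e'` are distinct edges of `H` whose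
deletion disconnects `H`. -/
def ECutPair {V : Type*} (H : SimpleGraph V) (e e' : Sym2 V) : Prop :=
  e ∈ H.edgeSet ∧ e' ∈ H.edgeSet ∧ e ≠ e' ∧ ¬ (H.deleteEdges {e, e'}).Connected

/-- An undirected graph is 2-edge-connected if it is connected and has no bridge. -/
def TwoEdgeConnected {W : Type*} (G : SimpleGraph W) : Prop :=
  G.Connected ∧ ∀ e ∈ G.edgeSet, ¬ G.IsBridge e

/-- An undirected graph is 2-vertex-connected if it has at least three vertices,
is connected, and deleting any single vertex leaves it connected. -/
def TwoVertexConnected {W : Type*} (G : SimpleGraph W) : Prop :=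
  3 ≤ Nat.card W ∧ G.Connected ∧ ∀ v : W, (G.induce {u | u ≠ v}).Connected

/-! Write `S(w)` for the set of descendants of `w` joined by a back-edge to a proper ancestor of
`w`. Every `x ∈ S(v)` is a descendant of `M(v)`, hence of `u`, and a proper ancestor of `v` is a
proper ancestor of `u`. Thus `S(v) ⊆ S(u)`, and shrinking a set of vertices can only move its
nearest common ancestor to a descendant. -/

theorem eq_of_iterate_eq_of_mem_periodicPts {α : Type*} {f : α → α} {x c : α} {n : ℕ}
    (hx : x ∈ Function.periodicPts f) (hc : Function.IsFixedPt f c) (hxc : f^[n] x = c) :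
    x = c := by
  -- The minimal period is constant along the orbit of a periodic point.
  have hx_fixed : Function.IsFixedPt f x := by
    rw [← Function.minimalPeriod_eq_one_iff_isFixedPt,
      ← Function.minimalPeriod_apply_iterate hx n, hxc]
    exact Function.minimalPeriod_eq_one_iff_isFixedPt.mpr hc
  exact (hx_fixed.iterate n).symm.trans hxc

namespace DFSTree

variable {V : Type*} {H : SimpleGraph V} {r : V} {T : DFSTree H r} {a b c u v x mu mv : V}

theorem Anc.trans (hab : T.Anc a b) (hbc : T.Anc b c) : T.Anc a c := by
  obtain ⟨m, rfl⟩ := hab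
  obtain ⟨n, rfl⟩ := hbc
  exact ⟨m + n, Function.iterate_add_apply T.par m n c⟩

theorem eq_root_of_mem_periodicPts (hv : v ∈ Function.periodicPts T.par) : v = r :=
  have ⟨_, hn⟩ := T.reaches_root v
  eq_of_iterate_eq_of_mem_periodicPts hv T.par_root hn

theorem Anc.eq_root (h : T.Anc a r) : a = r := by
  obtain ⟨n, rfl⟩ := h
  exact Function.iterate_fixed T.par_root n

theorem Anc.antisymm (hab : T.Anc a b) (hba : T.Anc b a) : a = b := by
  obtain ⟨m, hm⟩ := hab
  obtain ⟨n, hn⟩ := hba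
  obtain rfl | hm_pos := m.eq_zero_or_pos
  · exact hm.symm
  have hb_periodic : b ∈ Function.periodicPts T.par :=
    ⟨n + m, by omega, by rw [Function.IsPeriodicPt, Function.IsFixedPt,
      Function.iterate_add_apply, hm, hn]⟩
  obtain rfl : b = r := eq_root_of_mem_periodicPts hb_periodic
  exact Anc.eq_root ⟨m, hm⟩

theorem PAnc.trans_anc (hab : T.PAnc a b) (hbc : T.Anc b c) : T.PAnc a c := by
  refine ⟨hab.1.trans hbc, ?_⟩
  rintro rfl
  exact hab.2 (hab.1.antisymm hbc)

theorem mem_MSet_of_anc (hx : x ∈ T.MSet v) (hvu : T.Anc v u) (hux : T.Anc u x) :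
    x ∈ T.MSet u := by
  obtain ⟨-, y, hyv, hxy⟩ := hx
  exact ⟨hux, y, hyv.trans_anc hvu, hxy⟩

theorem IsM.MSet_subset_MSet (hmv : T.IsM v mv) (hvu : T.Anc v u) (humv : T.Anc u mv) :
    T.MSet v ⊆ T.MSet u :=
  fun x hx => mem_MSet_of_anc hx hvu (humv.trans (hmv.1 x hx))

theorem IsM.anc_of_MSet_subset (hmu : T.IsM u mu) (hmv : T.IsM v mv)
    (hsub : T.MSet v ⊆ T.MSet u) : T.Anc mu mv :=
  hmv.2 mu fun x hx => hmu.1 x (hsub hx)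

end DFSTree

theorem stmt_8_general {V : Type*} {H : SimpleGraph V} {r : V} {T : DFSTree H r} {u v mu mv : V}
    (hmu : T.IsM u mu) (hmv : T.IsM v mv) (hanc : T.Anc v u) (hdesc : T.Anc u mv) :
    T.Anc mu mv :=
  hmu.anc_of_MSet_subset hmv (hmv.MSet_subset_MSet hanc hdesc)

theorem stmt_8 {V : Type*} [Fintype V] (H : SimpleGraph V) (r : V)
    (T : DFSTree H r) (hH : TwoVertexConnected H) (u v mu mv : V)
    (hu : u ≠ r) (hv : v ≠ r) (hmu : T.IsM u mu) (hmv : T.IsM v mv)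
    (hanc : T.Anc v u) (hdesc : T.Anc u mv) :
    T.Anc mu mv := by
  exact stmt_8_general hmu hmv hanc hdesc
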